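/- If G is a tree on n vertices, then its Wiener index satisfies W(G) = n·Σ_{i=1}^{n−1} 1/μ_i, where μ_1 ≥ μ_2 ≥ ⋯ ≥ μ_{n−1} > μ_n = 0 are the eigenvalues of the Laplacian matrix of G. -/

import Mathlib

open SimpleGraph Finset Polynomial

/-- The Wiener index of a graph `G`: half the sum of the distances between all ordered
pairs of vertices, i.e. the sum of distances over all unordered pairs. -/
noncomputable def wienerIndex {V : Type*} [Fintype V] (G : SimpleGraph V) : ℚ :=
  (∑ u : V, ∑ v : V, (G.dist u v : ℚ)) / 2

/-!
Let `L` be the Laplacian matrix, `D` the distance matrix and `J` the all-ones matrix. In a tree,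
exactly one neighbour of `u` is closer to `v ≠ u`, and all the others are farther away; hence
`L D = τ 1ᵀ - 2 I` with `τ u = 2 - deg u`. The pseudoinverse `L⁺` of `L` satisfies `L⁺ 1 = 0` and
`L⁺ L = I - J / n`, so multiplying by `L⁺` and taking traces gives
`tr D - tr (J D) / n = -2 tr L⁺`. Here `tr D = 0`, `tr (J D) = 2 W(G)`, and `tr L⁺` is the sum of
the reciprocals of the nonzero eigenvalues of `L`.
-/

section HermitianMatrix

open Matrix
open scoped ComplexOrder

variable {n 𝕜 : Type*} [Fintype n] [DecidableEq n] [RCLike 𝕜] {A : Matrix n n 𝕜}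

theorem trace_cfc_eq_sum_eigenvalues (hA : A.IsHermitian) (f : ℝ → ℝ) :
    (cfc f A).trace = ∑ i, (f (hA.eigenvalues i) : 𝕜) := by
  rw [hA.cfc_eq, IsHermitian.cfc, Unitary.conjStarAlgAut_apply, trace_mul_cycle,
    Unitary.coe_star_mul_self, one_mul, trace_diagonal]
  rfl

theorem eq_eigenvalues₀_of_antitone (hA : A.IsHermitian) {μ : Fin (Fintype.card n) → ℝ}
    (hmono : Antitone μ) (hμ : A.charpoly = ∏ i, (X - C (μ i : 𝕜))) : μ = hA.eigenvalues₀ := by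
  have hroots : A.charpoly.roots.map RCLike.re = univ.val.map μ := by
    rw [hμ, roots_prod _ _ (prod_ne_zero_iff.2 fun i _ ↦ X_sub_C_ne_zero _)]
    simp [Function.comp_def]
  rw [← List.ofFn_inj, ← hA.sort_roots_charpoly_eq_eigenvalues₀, hroots]
  refine List.Perm.eq_of_sortedGE hmono.sortedGE_ofFn
    (Multiset.pairwise_sort _ _).sortedGE (Multiset.coe_eq_coe.1 ?_)
  rw [Multiset.sort_eq, Fin.univ_val_map]

theorem eigenvalues₀_last_eq_zero_of_det_eq_zero (hA : A.PosSemidef) (hdet : A.det = 0)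
    {i : Fin (Fintype.card n)} (hi : Fintype.card n - 1 ≤ i) : hA.1.eigenvalues₀ i = 0 := by
  have hnonneg : 0 ≤ hA.1.eigenvalues₀ i := by
    simpa [IsHermitian.eigenvalues] using
      hA.eigenvalues_nonneg (Fintype.equivOfCardEq (Fintype.card_fin _) i)
  obtain ⟨j, hj⟩ : ∃ j, hA.1.eigenvalues j = 0 := by
    simpa [hA.1.det_eq_prod_eigenvalues, prod_eq_zero_iff] using hdet
  refine le_antisymm ?_ hnonneg
  rw [← hj]
  exact hA.1.eigenvalues₀_antitone (Fin.le_def.2 (by omega))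

/-- The Moore–Penrose inverse of a Hermitian matrix, obtained by inverting its nonzero
eigenvalues. The convention `0⁻¹ = 0` takes care of the kernel. For other matrices the
value is `0`. -/
noncomputable def pinv (A : Matrix n n 𝕜) : Matrix n n 𝕜 :=
  cfc (fun x : ℝ ↦ x⁻¹) A

theorem isHermitian_pinv (A : Matrix n n 𝕜) : (pinv A).IsHermitian :=
  cfc_predicate (R := ℝ) _ A

theorem trace_pinv (hA : A.IsHermitian) :
    (pinv A).trace = ∑ i, ((hA.eigenvalues i)⁻¹ : 𝕜) := by
  simp [pinv, trace_cfc_eq_sum_eigenvalues hA]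

theorem cfc_mul_self_of_isHermitian (hA : A.IsHermitian) (f : ℝ → ℝ) :
    cfc f A * A = cfc (fun x ↦ f x * x) A := by
  rw [cfc_mul _ _ A (finite_real_spectrum.continuousOn _), cfc_id' ℝ A hA.isSelfAdjoint]

theorem isHermitian_pinv_mul_self (hA : A.IsHermitian) : (pinv A * A).IsHermitian := by
  rw [pinv, cfc_mul_self_of_isHermitian hA]
  exact cfc_predicate (R := ℝ) _ A

theorem self_mul_pinv_mul_self (hA : A.IsHermitian) : A * (pinv A * A) = A := by
  have hcomm : Commute A (pinv A) := by
    have := cfc_commute_cfc (fun x : ℝ ↦ x) (fun x ↦ x⁻¹) A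
    rwa [cfc_id' ℝ A hA.isSelfAdjoint] at this
  calc A * (pinv A * A) = cfc (fun x : ℝ ↦ x⁻¹ * x * x) A := by
        rw [← mul_assoc, hcomm.eq, pinv, cfc_mul_self_of_isHermitian hA,
          cfc_mul_self_of_isHermitian hA]
    _ = A := by simp only [inv_mul_mul_self, cfc_id' ℝ A hA.isSelfAdjoint]

theorem pinv_mulVec_eq_zero (hA : A.IsHermitian) {x : n → 𝕜} (hx : A *ᵥ x = 0) :
    pinv A *ᵥ x = 0 := by
  have hfactor : pinv A = cfc (fun x : ℝ ↦ x⁻¹ * x⁻¹) A * A := by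
    rw [cfc_mul_self_of_isHermitian hA, pinv]
    congr! 2 with x
    rcases eq_or_ne x 0 with rfl | h0 <;> simp [*]
  rw [hfactor, ← mulVec_mulVec, hx, mulVec_zero]

end HermitianMatrix

section Tree

variable {V : Type*} {G : SimpleGraph V} {u v : V}

theorem existsUnique_adj_dist_eq_dist_add_one (hG : G.IsTree) (huv : u ≠ v) :
    ∃! w, G.Adj u w ∧ G.dist u v = G.dist w v + 1 := by
  obtain ⟨p, hp⟩ := hG.connected.exists_walk_length_eq_dist u v
  cases p with
  | nil => exact absurd rfl huv
  | @cons _ w _ hadj q =>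
    have hq : G.dist w v = q.length := by
      have hle := G.dist_le q
      have htri := hG.connected.dist_triangle (u := u) (v := w) (w := v)
      rw [dist_eq_one_iff_adj.2 hadj, ← hp, Walk.length_cons] at htri
      omega
    refine ⟨w, ⟨hadj, by rw [← hp, Walk.length_cons, hq]⟩, ?_⟩
    rintro w' ⟨hadj', hdist⟩
    obtain ⟨r, hr⟩ := hG.connected.exists_walk_length_eq_dist w' v
    have hpath : (Walk.cons hadj' r).IsPath :=
      Walk.isPath_of_length_eq_dist _ (by rw [Walk.length_cons, hr, hdist])
    have heq := (hG.existsUnique_path u v).unique hpath (Walk.isPath_of_length_eq_dist _ hp)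
    exact (Walk.cons.inj heq).1

theorem sum_neighborFinset_dist_self {R : Type*} [AddCommMonoidWithOne R]
    [Fintype (G.neighborSet u)] : ∑ w ∈ G.neighborFinset u, (G.dist w u : R) = G.degree u := by
  have hdist : ∀ w ∈ G.neighborFinset u, (G.dist w u : R) = 1 := fun w hw ↦ by
    rw [dist_eq_one_iff_adj.2 ((G.mem_neighborFinset u w).1 hw).symm, Nat.cast_one]
  simp [sum_congr rfl hdist]

theorem sum_neighborFinset_dist {R : Type*} [NonAssocRing R] [Fintype (G.neighborSet u)]
    (hG : G.IsTree) (huv : u ≠ v) :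
    ∑ w ∈ G.neighborFinset u, (G.dist w v : R) = G.degree u * (G.dist u v + 1) - 2 := by
  classical
  obtain ⟨w₀, ⟨hadj₀, hdist₀⟩, hunique⟩ := existsUnique_adj_dist_eq_dist_add_one hG huv
  have hdist : ∀ w ∈ G.neighborFinset u,
      (G.dist w v : R) = (G.dist u v + 1) - if w = w₀ then 2 else 0 := by
    intro w hw
    rw [mem_neighborFinset] at hw
    split_ifs with h
    · rw [h, hdist₀]
      push_cast
      rw [add_assoc, one_add_one_eq_two, add_sub_cancel_right]
    · have hfar : G.dist w v = G.dist u v + 1 := by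
        have := hG.dist_eq_dist_add_one_of_adj v hw
        simp only [G.dist_comm (u := v)] at this
        exact this.resolve_left fun hcloser ↦ h (hunique w ⟨hw, hcloser⟩)
      simp [hfar]
  rw [sum_congr rfl hdist, sum_sub_distrib, sum_const, card_neighborFinset_eq_degree,
    nsmul_eq_mul, sum_ite_eq', if_pos ((G.mem_neighborFinset u w₀).2 hadj₀)]

end Tree

section Laplacian

open Matrix

variable {V : Type*}

/-- The distance matrix of a graph, whose `(u, v)` entry is the distance from `u` to `v`
(`0` when `v` is not reachable from `u`). -/
noncomputable def distMatrix (R : Type*) [NatCast R] (G : SimpleGraph V) : Matrix V V R :=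
  of fun u v ↦ (G.dist u v : R)

variable [Fintype V]

theorem wienerIndex_eq_trace_vecMulVec_one_mul_distMatrix (G : SimpleGraph V) :
    (wienerIndex G : ℝ) = (vecMulVec 1 1 * distMatrix ℝ G).trace / 2 := by
  rw [trace_mul_comm, mul_vecMulVec, trace_vecMulVec]
  simp [wienerIndex, distMatrix, mulVec, dotProduct]

variable [DecidableEq V] {G : SimpleGraph V} [DecidableRel G.Adj]

theorem lapMatrix_mul_distMatrix {R : Type*} [NonAssocRing R] (hG : G.IsTree) :
    G.lapMatrix R * distMatrix R G = vecMulVec (fun u ↦ 2 - (G.degree u : R)) 1 - (2 : R) • 1 := by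
  ext u v
  have hentry : (G.lapMatrix R * distMatrix R G) u v =
      G.degree u * (G.dist u v : R) - ∑ w ∈ G.neighborFinset u, (G.dist w v : R) :=
    G.lapMatrix_mulVec_apply u fun w ↦ (G.dist w v : R)
  rw [hentry, Matrix.sub_apply, vecMulVec_apply, Pi.one_apply, mul_one]
  rcases eq_or_ne u v with rfl | huv
  · rw [sum_neighborFinset_dist_self]
    simp
  · rw [sum_neighborFinset_dist hG huv]
    simp [huv, mul_add, sub_sub_eq_add_sub, sub_add_eq_sub_sub]

theorem eq_inv_card_smul_of_lapMatrix_mul_eq_zero (hG : G.Connected) {P : Matrix V V ℝ}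
    (hsymm : P.IsSymm) (hmul : G.lapMatrix ℝ * P = 0) (hone : P *ᵥ 1 = 1) :
    P = (Fintype.card V : ℝ)⁻¹ • vecMulVec 1 1 := by
  have hcol (u u' v : V) : P u v = P u' v :=
    (lapMatrix_mulVec_eq_zero_iff_forall_reachable G (x := P.col v)).1
      (by ext w; exact congrFun (congrFun hmul w) v) u u' (hG u u')
  ext u v
  have hrow (w : V) : P u w = P u v := by
    rw [hsymm.apply w u, hcol w v u, hsymm.apply u v]
  have hsum : Fintype.card V * P u v = 1 := by
    simpa [mulVec, dotProduct, hrow] using congrFun hone u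
  simpa [vecMulVec_apply] using eq_inv_of_mul_eq_one_right hsum

theorem pinv_lapMatrix_mul_lapMatrix (hG : G.Connected) :
    pinv (G.lapMatrix ℝ) * G.lapMatrix ℝ = 1 - (Fintype.card V : ℝ)⁻¹ • vecMulVec 1 1 := by
  have hL := G.isHermitian_lapMatrix (R := ℝ)
  rw [eq_sub_iff_add_eq, ← eq_sub_iff_add_eq', eq_comm]
  apply eq_inv_card_smul_of_lapMatrix_mul_eq_zero hG
  · exact isSymm_one.sub (isHermitian_pinv_mul_self hL)
  · rw [mul_sub, mul_one, self_mul_pinv_mul_self hL, sub_self]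
  · have hone : G.lapMatrix ℝ *ᵥ 1 = 0 := G.lapMatrix_mulVec_const_eq_zero
    rw [sub_mulVec, one_mulVec, ← mulVec_mulVec, hone, mulVec_zero, sub_zero]

theorem wienerIndex_eq_card_mul_trace_pinv (hG : G.IsTree) :
    (wienerIndex G : ℝ) = Fintype.card V * (pinv (G.lapMatrix ℝ)).trace := by
  set L := G.lapMatrix ℝ
  set D := distMatrix ℝ G
  have hL : L.IsHermitian := G.isHermitian_lapMatrix (R := ℝ)
  have hLD : (pinv L * L * D).trace = -2 * (pinv L).trace := by
    have hker : (1 : V → ℝ) ᵥ* pinv L = 0 := by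
      have hone : L *ᵥ 1 = 0 := G.lapMatrix_mulVec_const_eq_zero
      have hsymm : (pinv L).IsSymm := isHermitian_pinv L
      rw [← mulVec_transpose, hsymm.eq, pinv_mulVec_eq_zero hL hone]
    rw [mul_assoc, lapMatrix_mul_distMatrix hG, mul_sub, mul_vecMulVec, trace_sub,
      trace_vecMulVec, dotProduct_comm, dotProduct_mulVec, hker, zero_dotProduct,
      Matrix.mul_smul, mul_one, trace_smul, zero_sub, smul_eq_mul, neg_mul]
  have hJD : (pinv L * L * D).trace = -(2 * wienerIndex G) / Fintype.card V := by
    have hdiag : D.trace = 0 := by simp [D, distMatrix, trace]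
    rw [pinv_lapMatrix_mul_lapMatrix hG.connected, sub_mul, one_mul, trace_sub, hdiag,
      smul_mul_assoc, trace_smul,
      wienerIndex_eq_trace_vecMulVec_one_mul_distMatrix, smul_eq_mul]
    ring
  have := hG.connected.nonempty
  have hcard : (Fintype.card V : ℝ) ≠ 0 := by simp
  have htrace : -(2 * wienerIndex G) / Fintype.card V = -2 * (pinv L).trace := hJD.symm.trans hLD
  rw [div_eq_iff hcard] at htrace
  linarith

end Laplacian

/-- If `G` is a tree on `n` vertices with Laplacian eigenvalues
`μ 0 ≥ μ 1 ≥ ⋯ ≥ μ (n-1) = 0` (listed with multiplicity, in nonincreasing order), then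
`W(G) = n · ∑_{i=1}^{n-1} 1/μ_i`. -/
theorem wienerIndex_tree {V : Type*} [Fintype V] [DecidableEq V]
    (G : SimpleGraph V) [DecidableRel G.Adj] (hG : G.IsTree)
    (μ : Fin (Fintype.card V) → ℝ) (hmono : Antitone μ)
    (hμ : (G.lapMatrix ℝ).charpoly = ∏ i : Fin (Fintype.card V), (X - C (μ i))) :
    (wienerIndex G : ℝ) =
      (Fintype.card V : ℝ) *
        ∑ i ∈ Finset.univ.filter (fun i : Fin (Fintype.card V) => (i : ℕ) < Fintype.card V - 1),
          1 / μ i := by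
  have hL : (G.lapMatrix ℝ).PosSemidef := G.posSemidef_lapMatrix ℝ
  obtain rfl := eq_eigenvalues₀_of_antitone hL.1 hmono hμ
  have := hG.connected.nonempty
  have hlast : ∀ i : Fin (Fintype.card V), 1 / hL.1.eigenvalues₀ i ≠ 0 →
      (i : ℕ) < Fintype.card V - 1 := fun i ↦ by
    contrapose!
    intro hi
    rw [eigenvalues₀_last_eq_zero_of_det_eq_zero hL G.det_lapMatrix_eq_zero hi, div_zero]
  rw [wienerIndex_eq_card_mul_trace_pinv hG, trace_pinv hL.1,
    sum_filter_of_ne fun i _ ↦ hlast i]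
  congr 1
  exact Fintype.sum_equiv (Fintype.equivOfCardEq (Fintype.card_fin _)).symm _ _
    fun i ↦ (one_div _).symm
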